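/- arXiv:2412.04961 — 3 statements merged into one kernel-verified Lean document; each statement's English description precedes it below -/
import Mathlib

section
/- Let (E^•, I_•, ∫) be a Cheeger–Simons model over 𝕂 and k ≥ 0. There is a short exact sequence of abelian groups 0 → H^k(Hom(I_•, 𝕂/ℤ)) → Diff^k(CS) → E^{k+1}_0 → 0, where the first map sends the class [σ] of a δ-closed σ ∈ Hom(I_k, 𝕂/ℤ) to its restriction σ|_{Z_k(I_•)}, and the second map is δ₁, which assigns to f the unique ω ∈ E^{k+1} with f(∂β) ≡ ∫_β ω (mod ℤ) for all β ∈ I_{k+1}. -/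
/-!
The group `𝕂/ℤ` is divisible, hence an injective abelian group: a homomorphism into it that kills
`ker φ` factors through `φ`. For `φ = ∂ : I_k → I_{k-1}`, this identifies the coboundaries among
the cochains with those vanishing on `Z_k`; for the inclusion `Z_k ⊆ I_k`, it then identifies
`H^k(Hom(I_•, 𝕂/ℤ))` with the `f : Z_k → 𝕂/ℤ` such that `f ∘ ∂ = 0`, which are the `f` with
`δ₁ f = 0`. For `∂ : I_{k+1} → Z_k`, it produces a differential character `f` with `δ₁ f = ω` from
every `ω` with integral periods.
-/

open AddSubgroup

noncomputable section

/-- Cycles of an `ℕ`-indexed chain complex, with the convention `Z_0 = I_0`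
(i.e. `∂ : I_0 → I_{-1} = 0`). -/
def Zc {I : ℕ → Type*} [∀ i, AddCommGroup (I i)] (bd : ∀ k, I (k+1) →+ I k) :
    ∀ k, AddSubgroup (I k)
  | 0 => ⊤
  | n+1 => (bd n).ker

theorem mem_Zc_bd {I : ℕ → Type*} [∀ i, AddCommGroup (I i)] (bd : ∀ k, I (k+1) →+ I k)
    (hbd : ∀ k x, bd k (bd (k+1) x) = 0) :
    ∀ (k : ℕ) (β : I (k+1)), bd k β ∈ Zc bd k
  | 0, _ => mem_top _
  | n+1, β => by simpa [Zc, AddMonoidHom.mem_ker] using hbd n β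

/-- Coboundaries of an `ℕ`-indexed cochain complex, with the convention
`B^0 = 0`. -/
def Bc {E : ℕ → Type*} [∀ i, AddCommGroup (E i)] (d : ∀ k, E k →+ E (k+1)) :
    ∀ k, AddSubgroup (E k)
  | 0 => ⊥
  | n+1 => (d n).range

/-- Cohomology of an `ℕ`-indexed cochain complex. -/
abbrev Hc {E : ℕ → Type*} [∀ i, AddCommGroup (E i)] (d : ∀ k, E k →+ E (k+1)) (k : ℕ) :=
  ↥(d k).ker ⧸ ((Bc d k).addSubgroupOf (d k).ker)

/-- The class of a cocycle in cohomology. -/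
def Hmk {E : ℕ → Type*} [∀ i, AddCommGroup (E i)] (d : ∀ k, E k →+ E (k+1)) (k : ℕ) :
    ↥(d k).ker →+ Hc d k := QuotientAddGroup.mk' _

/-- The codifferential on `Hom(I_•, A)` induced by the boundary map of `I_•`. -/
def codiff {I : ℕ → Type*} [∀ i, AddCommGroup (I i)] (bd : ∀ k, I (k+1) →+ I k)
    (A : Type*) [AddCommGroup A] (k : ℕ) : (I k →+ A) →+ (I (k+1) →+ A) :=
  AddMonoidHom.mk' (fun h => h.comp (bd k)) (fun h g => by ext x; simp)

/-- `ℤ` regarded as an additive subgroup of `𝕂`. -/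
def intSub (𝕂 : Type*) [Field 𝕂] : AddSubgroup 𝕂 := zmultiples (1 : 𝕂)

/-- The group `𝕂/ℤ`. -/
abbrev KmodZ (𝕂 : Type*) [Field 𝕂] := 𝕂 ⧸ intSub 𝕂

/-- The quotient map `q : 𝕂 → 𝕂/ℤ`. -/
def qZ (𝕂 : Type*) [Field 𝕂] : 𝕂 →+ KmodZ 𝕂 := QuotientAddGroup.mk' _

/-- The inclusion `Φ : Hom(I_k, ℤ) → Hom(I_k, 𝕂)`. -/
def PhiMap {I : ℕ → Type*} [∀ i, AddCommGroup (I i)] (𝕂 : Type*) [Field 𝕂] (k : ℕ) :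
    (I k →+ ℤ) →+ (I k →+ 𝕂) :=
  AddMonoidHom.mk' (fun h => (Int.castAddHom 𝕂).comp h) (fun a b => by ext x; simp)

/-- The differential character group `Diff^k` of a Cheeger–Simons model. -/
def DiffChar {𝕂 : Type*} [Field 𝕂] {I E : ℕ → Type*}
    [∀ i, AddCommGroup (I i)] [∀ i, AddCommGroup (E i)]
    (bd : ∀ k, I (k+1) →+ I k) (hbd : ∀ k x, bd k (bd (k+1) x) = 0)
    (pair : ∀ k, E k →+ (I k →+ 𝕂)) (k : ℕ) :
    AddSubgroup ((Zc bd k) →+ KmodZ 𝕂) where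
  carrier := {f | ∃ ω : E (k+1), ∀ β : I (k+1),
      f ⟨bd k β, mem_Zc_bd bd hbd k β⟩ = qZ 𝕂 (pair (k+1) ω β)}
  add_mem' := by
    rintro f g ⟨ω, hω⟩ ⟨ω', hω'⟩
    exact ⟨ω + ω', fun β => by
      simp [AddMonoidHom.add_apply, hω β, hω' β]⟩
  zero_mem' := ⟨0, fun β => by simp [qZ]⟩
  neg_mem' := by
    rintro f ⟨ω, hω⟩
    exact ⟨-ω, fun β => by simp [AddMonoidHom.neg_apply, hω β]⟩

/-- The subgroup `E^k_0` of closed elements of `E^k` with integral periods. -/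
def Ezero {𝕂 : Type*} [Field 𝕂] {I E : ℕ → Type*}
    [∀ i, AddCommGroup (I i)] [∀ i, AddCommGroup (E i)]
    (bd : ∀ k, I (k+1) →+ I k) (d : ∀ k, E k →+ E (k+1))
    (pair : ∀ k, E k →+ (I k →+ 𝕂)) (k : ℕ) : AddSubgroup (E k) where
  carrier := {ω | d k ω = 0 ∧ ∀ α ∈ Zc bd k, pair k ω α ∈ intSub 𝕂}
  add_mem' := by
    rintro ω ω' ⟨h1, h2⟩ ⟨h1', h2'⟩
    refine ⟨by simp [h1, h1'], fun α hα => ?_⟩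
    simpa [AddMonoidHom.add_apply] using add_mem (h2 α hα) (h2' α hα)
  zero_mem' := ⟨by simp, fun α _ => by simp [zero_mem]⟩
  neg_mem' := by
    rintro ω ⟨h1, h2⟩
    exact ⟨by simp [h1], fun α hα => by
      simpa [AddMonoidHom.neg_apply] using neg_mem (h2 α hα)⟩

theorem exists_comp_eq_iff_ker_le_ker {A B C : Type*} [AddCommGroup A] [AddCommGroup B]
    [AddCommGroup C] [DivisibleBy C ℤ] (φ : A →+ B) (g : A →+ C) :
    (∃ h : B →+ C, h.comp φ = g) ↔ φ.ker ≤ g.ker := by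
  constructor
  · rintro ⟨h, rfl⟩
    exact AddSubgroup.ker_le_comap φ h.ker
  · intro hker
    obtain ⟨h, hh⟩ := (Module.Baer.of_divisible C).extension_property_addMonoidHom
      (QuotientAddGroup.kerLift φ) (QuotientAddGroup.kerLift_injective φ)
      (QuotientAddGroup.lift φ.ker g hker)
    exact ⟨h, AddMonoidHom.ext fun a => DFunLike.congr_fun hh (a : A ⧸ φ.ker)⟩

section Cochains

variable {I : ℕ → Type*} [∀ i, AddCommGroup (I i)] (bd : ∀ k, I (k + 1) →+ I k)

/-- The boundary map `∂ : I_{k+1} → Z_k` with values in the cycles, through which the condition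
defining differential characters reads `f ∘ ∂ = q ∘ ∫ω`. -/
def bdToCycles (hbd : ∀ k x, bd k (bd (k + 1) x) = 0) (k : ℕ) : I (k + 1) →+ Zc bd k :=
  (bd k).codRestrict (Zc bd k) (mem_Zc_bd bd hbd k)

theorem ker_bdToCycles (hbd : ∀ k x, bd k (bd (k + 1) x) = 0) (k : ℕ) :
    (bdToCycles bd hbd k).ker = Zc bd (k + 1) :=
  AddMonoidHom.ker_codRestrict _ _ _

variable {A : Type*} [AddCommGroup A]

theorem Zc_le_ker_of_mem_Bc_codiff :
    ∀ (k : ℕ) {σ : I k →+ A}, σ ∈ Bc (codiff bd A) k → Zc bd k ≤ σ.ker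
  | 0, σ, hσ => by
    rw [AddSubgroup.mem_bot.mp hσ, AddMonoidHom.ker_zero]
    exact le_top
  | k + 1, _, ⟨τ, hτ⟩ => hτ ▸ AddSubgroup.ker_le_comap (bd k) τ.ker

theorem mem_Bc_codiff_iff [DivisibleBy A ℤ] :
    ∀ (k : ℕ) (σ : I k →+ A), σ ∈ Bc (codiff bd A) k ↔ Zc bd k ≤ σ.ker
  | 0, σ => by
    rw [Bc, Zc, AddSubgroup.mem_bot, top_le_iff, AddMonoidHom.ker_eq_top_iff]
  | k + 1, σ => exists_comp_eq_iff_ker_le_ker (bd k) σ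

variable (A) in
/-- The homomorphism `H^k(Hom(I_•, A)) → Hom(Z_k, A)` induced by restricting cocycles to cycles. -/
def restrictCycles (k : ℕ) : Hc (codiff bd A) k →+ (Zc bd k →+ A) :=
  QuotientAddGroup.lift _
    ((AddMonoidHom.compHom' (Zc bd k).subtype).comp (codiff bd A k).ker.subtype)
    fun _ hσ => AddMonoidHom.ext fun z => Zc_le_ker_of_mem_Bc_codiff bd k hσ z.2

theorem restrictCycles_comp_bdToCycles (hbd : ∀ k x, bd k (bd (k + 1) x) = 0) (k : ℕ)
    (x : Hc (codiff bd A) k) : (restrictCycles bd A k x).comp (bdToCycles bd hbd k) = 0 := by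
  obtain ⟨σ, rfl⟩ := QuotientAddGroup.mk_surjective x
  exact σ.2

theorem restrictCycles_injective [DivisibleBy A ℤ] (k : ℕ) :
    Function.Injective (restrictCycles bd A k) := by
  refine (injective_iff_map_eq_zero _).mpr fun x hx => ?_
  obtain ⟨σ, rfl⟩ := QuotientAddGroup.mk_surjective x
  have hσ : Zc bd k ≤ σ.1.ker := fun z hz => DFunLike.congr_fun hx (⟨z, hz⟩ : Zc bd k)
  exact (QuotientAddGroup.eq_zero_iff σ).mpr ((mem_Bc_codiff_iff bd k σ.1).mpr hσ)

theorem mem_range_restrictCycles_iff [DivisibleBy A ℤ] (hbd : ∀ k x, bd k (bd (k + 1) x) = 0)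
    (k : ℕ) (f : Zc bd k →+ A) :
    f ∈ (restrictCycles bd A k).range ↔ f.comp (bdToCycles bd hbd k) = 0 := by
  constructor
  · rintro ⟨x, rfl⟩
    exact restrictCycles_comp_bdToCycles bd hbd k x
  · intro hf
    obtain ⟨σ, rfl⟩ := (exists_comp_eq_iff_ker_le_ker (Zc bd k).subtype f).mpr
      ((AddSubgroup.ker_subtype _).trans_le bot_le)
    exact ⟨Hmk (codiff bd A) k ⟨σ, hf⟩, rfl⟩

end Cochains

section Characters

variable {𝕂 : Type*} [Field 𝕂] {I E : ℕ → Type*} [∀ i, AddCommGroup (I i)]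
  [∀ i, AddCommGroup (E i)]

instance divisibleByIntKmodZ [CharZero 𝕂] : DivisibleBy (KmodZ 𝕂) ℤ :=
  (QuotientAddGroup.mk'_surjective (intSub 𝕂)).divisibleBy _ fun x n =>
    map_zsmul (QuotientAddGroup.mk' (intSub 𝕂)) n x

/-- The reduction modulo `ℤ` of a `𝕂`-valued pairing, sending `ω` to `q ∘ ∫ω`. -/
def pairModZ {M G : Type*} [AddCommGroup M] [AddCommGroup G] (p : M →+ (G →+ 𝕂)) :
    M →+ (G →+ KmodZ 𝕂) :=
  (AddMonoidHom.compHom (qZ 𝕂)).comp p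

theorem pairModZ_apply_eq_zero_iff {M G : Type*} [AddCommGroup M] [AddCommGroup G]
    (p : M →+ (G →+ 𝕂)) (ω : M) (α : G) : pairModZ p ω α = 0 ↔ p ω α ∈ intSub 𝕂 :=
  QuotientAddGroup.eq_zero_iff (p ω α)

theorem pairModZ_injective {M G : Type*} [AddCommGroup M] [AddCommGroup G] {p : M →+ (G →+ 𝕂)}
    (hp : ∀ ω, (∀ α, p ω α ∈ intSub 𝕂) → ω = 0) : Function.Injective (pairModZ p) :=
  (injective_iff_map_eq_zero _).mpr fun ω hω => hp ω fun α =>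
    (pairModZ_apply_eq_zero_iff p ω α).mp (DFunLike.congr_fun hω α)

variable {bd : ∀ k, I (k + 1) →+ I k} {hbd : ∀ k x, bd k (bd (k + 1) x) = 0}
  {pair : ∀ k, E k →+ (I k →+ 𝕂)}

theorem mem_DiffChar_iff {k : ℕ} {f : Zc bd k →+ KmodZ 𝕂} :
    f ∈ DiffChar bd hbd pair k ↔
      ∃ ω, f.comp (bdToCycles bd hbd k) = pairModZ (pair (k + 1)) ω :=
  exists_congr fun _ => by rw [DFunLike.ext_iff]; rfl

variable (bd hbd pair) in
/-- The homomorphism `H^k(Hom(I_•, 𝕂/ℤ)) → Diff^k`, whose image is the group of flat characters. -/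
def cohomologyToDiffChar (k : ℕ) : Hc (codiff bd (KmodZ 𝕂)) k →+ DiffChar bd hbd pair k :=
  (restrictCycles bd (KmodZ 𝕂) k).codRestrict _ fun x =>
    mem_DiffChar_iff.mpr ⟨0, by rw [restrictCycles_comp_bdToCycles, map_zero]⟩

theorem cohomologyToDiffChar_injective [CharZero 𝕂] (k : ℕ) :
    Function.Injective (cohomologyToDiffChar bd hbd pair k) := fun _ _ h =>
  restrictCycles_injective bd k (congrArg Subtype.val h)

theorem mem_range_cohomologyToDiffChar_iff [CharZero 𝕂] {k : ℕ} (f : DiffChar bd hbd pair k) :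
    f ∈ (cohomologyToDiffChar bd hbd pair k).range ↔ f.1.comp (bdToCycles bd hbd k) = 0 := by
  rw [← mem_range_restrictCycles_iff]
  exact exists_congr fun _ => Subtype.ext_iff

/-- The map `δ₁ : Diff^k → E^{k+1}`, sending `f` to the `ω` with `f ∘ ∂ = q ∘ ∫ω`, which is unique
because the pairing modulo `ℤ` is injective in `ω`. -/
def curvature {k : ℕ} (hinj : Function.Injective (pairModZ (pair (k + 1)))) :
    DiffChar bd hbd pair k →+ E (k + 1) :=
  AddMonoidHom.mk' (fun f => (mem_DiffChar_iff.mp f.2).choose) fun f g => hinj <| by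
    rw [map_add, ← (mem_DiffChar_iff.mp (f + g).2).choose_spec,
      ← (mem_DiffChar_iff.mp f.2).choose_spec, ← (mem_DiffChar_iff.mp g.2).choose_spec]
    rfl

variable {k : ℕ} (hinj : Function.Injective (pairModZ (pair (k + 1))))

theorem comp_bdToCycles_eq_pairModZ_curvature (f : DiffChar bd hbd pair k) :
    f.1.comp (bdToCycles bd hbd k) = pairModZ (pair (k + 1)) (curvature hinj f) :=
  (mem_DiffChar_iff.mp f.2).choose_spec

theorem curvature_eq_iff {f : DiffChar bd hbd pair k} {ω : E (k + 1)} :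
    curvature hinj f = ω ↔ f.1.comp (bdToCycles bd hbd k) = pairModZ (pair (k + 1)) ω := by
  rw [comp_bdToCycles_eq_pairModZ_curvature hinj, hinj.eq_iff]

theorem curvature_eq_zero_iff_mem_range [CharZero 𝕂] (f : DiffChar bd hbd pair k) :
    curvature hinj f = 0 ↔ f ∈ (cohomologyToDiffChar bd hbd pair k).range := by
  rw [curvature_eq_iff, map_zero, mem_range_cohomologyToDiffChar_iff]

theorem exists_curvature_eq_iff [CharZero 𝕂] {ω : E (k + 1)} :
    (∃ f : DiffChar bd hbd pair k, curvature hinj f = ω) ↔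
      Zc bd (k + 1) ≤ (pairModZ (pair (k + 1)) ω).ker := by
  rw [← ker_bdToCycles bd hbd, ← exists_comp_eq_iff_ker_le_ker]
  simp only [curvature_eq_iff]
  exact ⟨fun ⟨f, hf⟩ => ⟨f.1, hf⟩, fun ⟨f, hf⟩ => ⟨⟨f, mem_DiffChar_iff.mpr ⟨ω, hf⟩⟩, hf⟩⟩

theorem mem_Ezero_iff_Zc_le_ker (hbd : ∀ k x, bd k (bd (k + 1) x) = 0)
    {d : ∀ k, E k →+ E (k + 1)}
    (int_triv : ∀ e : E (k + 1), (∀ β, pair (k + 1) e β ∈ intSub 𝕂) → e = 0)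
    (stokes : ∀ (e : E k) (α : I (k + 1)), pair k e (bd k α) = pair (k + 1) (d k e) α) (ω : E k) :
    ω ∈ Ezero bd d pair k ↔ Zc bd k ≤ (pairModZ (pair k) ω).ker := by
  have periods_iff : (∀ α ∈ Zc bd k, pair k ω α ∈ intSub 𝕂) ↔
      Zc bd k ≤ (pairModZ (pair k) ω).ker :=
    forall₂_congr fun α _ => (pairModZ_apply_eq_zero_iff (pair k) ω α).symm
  refine ⟨fun hω => periods_iff.mp hω.2, fun hω => ⟨int_triv _ fun α => ?_, periods_iff.mpr hω⟩⟩
  rw [← stokes]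
  exact periods_iff.mpr hω _ (mem_Zc_bd bd hbd k α)

end Characters

theorem statement3_general
    {𝕂 : Type*} [Field 𝕂] [CharZero 𝕂]
    (I E : ℕ → Type*) [∀ i, AddCommGroup (I i)] [∀ i, AddCommGroup (E i)]
    (bd : ∀ k, I (k + 1) →+ I k)
    (hbd : ∀ k x, bd k (bd (k + 1) x) = 0)
    (d : ∀ k, E k →+ E (k + 1))
    (pair : ∀ k, E k →+ (I k →+ 𝕂))
    (int_triv : ∀ (k : ℕ) (e : E k), (∀ β : I k, pair k e β ∈ intSub 𝕂) → e = 0)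
    (stokes : ∀ (k : ℕ) (e : E k) (α : I (k + 1)), pair k e (bd k α) = pair (k + 1) (d k e) α)
    (k : ℕ) :
    ∃ (ι : Hc (codiff bd (KmodZ 𝕂)) k →+ ↥(DiffChar bd hbd pair k))
      (δ₁ : ↥(DiffChar bd hbd pair k) →+ E (k + 1)),
      (∀ (σ : I k →+ KmodZ 𝕂) (hσ : σ ∈ (codiff bd (KmodZ 𝕂) k).ker),
          ((ι (Hmk (codiff bd (KmodZ 𝕂)) k ⟨σ, hσ⟩)) : ↥(Zc bd k) →+ KmodZ 𝕂)
            = σ.comp (Zc bd k).subtype) ∧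
      (∀ (f : ↥(DiffChar bd hbd pair k)) (β : I (k + 1)),
          (f : ↥(Zc bd k) →+ KmodZ 𝕂) ⟨bd k β, mem_Zc_bd bd hbd k β⟩
            = qZ 𝕂 (pair (k + 1) (δ₁ f) β)) ∧
      Function.Injective ι ∧
      (∀ f, δ₁ f ∈ Ezero bd d pair (k + 1)) ∧
      (∀ ω ∈ Ezero bd d pair (k + 1), ∃ f, δ₁ f = ω) ∧
      (∀ f, δ₁ f = 0 ↔ f ∈ ι.range) := by
  have hinj : Function.Injective (pairModZ (pair (k + 1))) := pairModZ_injective (int_triv (k + 1))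
  have exists_iff (ω : E (k + 1)) :
      (∃ f : DiffChar bd hbd pair k, curvature hinj f = ω) ↔ ω ∈ Ezero bd d pair (k + 1) :=
    (exists_curvature_eq_iff hinj).trans
      (mem_Ezero_iff_Zc_le_ker hbd (int_triv (k + 2)) (stokes (k + 1)) ω).symm
  exact ⟨cohomologyToDiffChar bd hbd pair k, curvature hinj,
    fun _ _ => rfl,
    fun f β => DFunLike.congr_fun (comp_bdToCycles_eq_pairModZ_curvature hinj f) β,
    cohomologyToDiffChar_injective k,
    fun f => (exists_iff _).mp ⟨f, rfl⟩,
    fun ω => (exists_iff ω).mpr,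
    curvature_eq_zero_iff_mem_range hinj⟩

/-- There is a short exact sequence
`0 → H^k(Hom(I_•, 𝕂/ℤ)) → Diff^k(𝒞𝒮) → E^{k+1}_0 → 0`, where the first map sends the
class of a `δ`-closed `σ : I_k → 𝕂/ℤ` to its restriction to `Z_k(I_•)` and the second is
`δ₁`, sending `f` to the unique `ω` with `f(∂β) ≡ ∫_β ω (mod ℤ)` for all `β`. -/
theorem statement3
    {𝕂 : Type*} [Field 𝕂] [CharZero 𝕂]
    (I E : ℕ → Type*)
    [∀ i, AddCommGroup (I i)] [∀ i, Module.Free ℤ (I i)]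
    [∀ i, AddCommGroup (E i)] [∀ i, Module 𝕂 (E i)]
    (bd : ∀ k, I (k+1) →+ I k)
    (hbd : ∀ k x, bd k (bd (k+1) x) = 0)
    (d : ∀ k, E k →+ E (k+1))
    (hd : ∀ k x, d (k+1) (d k x) = 0)
    (hdsmul : ∀ (k : ℕ) (c : 𝕂) (e : E k), d k (c • e) = c • d k e)
    (pair : ∀ k, E k →+ (I k →+ 𝕂))
    (pair_smul : ∀ (k : ℕ) (c : 𝕂) (e : E k) (x : I k), pair k (c • e) x = c * pair k e x)
    (pair_injE : ∀ k, Function.Injective (pair k))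
    (pair_injI : ∀ (k : ℕ) (x y : I k), (∀ e : E k, pair k e x = pair k e y) → x = y)
    (int_triv : ∀ (k : ℕ) (e : E k), (∀ β : I k, pair k e β ∈ intSub 𝕂) → e = 0)
    (stokes : ∀ (k : ℕ) (e : E k) (α : I (k+1)), pair k e (bd k α) = pair (k+1) (d k e) α)
    (deRham_inj : ∀ (k : ℕ) (e : E k), d k e = 0 → pair k e ∈ Bc (codiff bd 𝕂) k → e ∈ Bc d k)
    (deRham_surj : ∀ (k : ℕ) (h : I k →+ 𝕂), codiff bd 𝕂 k h = 0 →
      ∃ e : E k, d k e = 0 ∧ h - pair k e ∈ Bc (codiff bd 𝕂) k)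
    (k : ℕ) :
    ∃ (ι : Hc (codiff bd (KmodZ 𝕂)) k →+ ↥(DiffChar bd hbd pair k))
      (δ₁ : ↥(DiffChar bd hbd pair k) →+ E (k+1)),
      (∀ (σ : I k →+ KmodZ 𝕂) (hσ : σ ∈ (codiff bd (KmodZ 𝕂) k).ker),
          ((ι (Hmk (codiff bd (KmodZ 𝕂)) k ⟨σ, hσ⟩)) : ↥(Zc bd k) →+ KmodZ 𝕂)
            = σ.comp (Zc bd k).subtype) ∧
      (∀ (f : ↥(DiffChar bd hbd pair k)) (β : I (k+1)),
          (f : ↥(Zc bd k) →+ KmodZ 𝕂) ⟨bd k β, mem_Zc_bd bd hbd k β⟩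
            = qZ 𝕂 (pair (k+1) (δ₁ f) β)) ∧
      Function.Injective ι ∧
      (∀ f, δ₁ f ∈ Ezero bd d pair (k+1)) ∧
      (∀ ω ∈ Ezero bd d pair (k+1), ∃ f, δ₁ f = ω) ∧
      (∀ f, δ₁ f = 0 ↔ f ∈ ι.range) :=
  statement3_general I E bd hbd d pair int_triv stokes k

end
end

section
/- Let (E^•, I_•, ∫) be a Cheeger–Simons model over 𝕂 and k ≥ 0. There is a short exact sequence of abelian groups 0 → E^k/E^k_0 → Diff^k(CS) → H^{k+1}(I^•) → 0, where the first map is induced by α ↦ (q∘α̃)|_{Z_k(I_•)} (whose kernel is exactly E^k_0), and the second map is the homomorphism δ₂ assigning to f the class [c] ∈ H^{k+1}(I^•) where δT = ω̃ − c for any T ∈ F^k with (q∘T)|_{Z_k(I_•)} = f. -/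
open AddSubgroup

noncomputable section

/-!
A *spark* is a triple `(T, ω, c)` of a `𝕂`-valued cochain, a form and an integral cochain with
`δT = ω̃ - c`. A form whose pairing is an integral cochain vanishes, so applying `δ` to the spark
equation forces `dω = 0` and `δc = 0`. Hence a spark has a character `(q ∘ T)|_Z` and a class `[c]`,
and the exact sequence compares these two homomorphisms.

Subgroups of free abelian groups are projective, so homomorphisms out of `Z_k` extend to `I_k`.
Extending and then lifting along `q` shows that every differential character comes from a spark.
If the character of a spark is trivial, then `T` agrees on `Z_k` with an integral cochain `s`, so
`δs - ω̃ = -c`; integrality again gives `ω = 0`, whence `c` is a coboundary. Therefore `[c]` depends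
only on the character, and this defines `δ₂`. Its surjectivity and its kernel are read off from the
de Rham property.
-/

section Projective

theorem exists_lift_of_injective_of_divisible {N P Q B : Type*} [AddCommGroup N] [AddCommGroup P]
    [AddCommGroup Q] [AddCommGroup B] [Module.Projective ℤ P] [DivisibleBy Q ℤ]
    (j : N →ₗ[ℤ] P) (hj : Function.Injective j) (π : Q →ₗ[ℤ] B) (hπ : Function.Surjective π)
    (u : N →ₗ[ℤ] B) : ∃ h : P →ₗ[ℤ] Q, ∀ n, π (h (j n)) = u n := by
  let _ : DivisibleBy B ℤ := hπ.divisibleBy π fun x n => map_zsmul π n x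
  obtain ⟨g, hg⟩ := (Module.Baer.of_divisible B).extension_property j hj u
  obtain ⟨h, hh⟩ := Module.projective_lifting_property π g hπ
  exact ⟨h, fun n => (LinearMap.congr_fun hh (j n)).trans (LinearMap.congr_fun hg n)⟩

theorem projective_int_of_injective {N P : Type*} [AddCommGroup N] [AddCommGroup P]
    [Module.Projective ℤ P] (j : N →ₗ[ℤ] P) (hj : Function.Injective j) :
    Module.Projective ℤ N := by
  -- The divisible quotient `ℚ^N / R` receives `N ≃ ℤ^(N) / R`, where `R` is the group of relations
  -- of the free cover of `N`. Extend this map to `P` and lift the extension to `P → ℚ^N`: the lift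
  -- sends `N` into `ℤ^(N)`, and so splits the cover.
  let cover : (N →₀ ℤ) →ₗ[ℤ] N := Finsupp.linearCombination ℤ id
  have cover_surjective : Function.Surjective cover := Finsupp.linearCombination_id_surjective ℤ N
  let i : (N →₀ ℤ) →ₗ[ℤ] (N → ℚ) :=
    ((Int.castAddHom ℚ).toIntLinearMap.compLeft N) ∘ₗ Finsupp.lcoeFun
  have i_injective : Function.Injective i := fun x y hxy =>
    Finsupp.ext fun n => Int.cast_injective (congrFun hxy n)
  let R : Submodule ℤ (N → ℚ) := cover.ker.map i
  let u : N →ₗ[ℤ] (N → ℚ) ⧸ R :=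
    cover.ker.mapQ R i (Submodule.le_comap_map _ _) ∘ₗ
      (cover.quotKerEquivOfSurjective cover_surjective).symm
  have u_cover (x : N →₀ ℤ) : u (cover x) = R.mkQ (i x) := by
    have : (cover.quotKerEquivOfSurjective cover_surjective).symm (cover x) = cover.ker.mkQ x :=
      (LinearEquiv.symm_apply_eq _).2 rfl
    simp [u, this]
  obtain ⟨h, hh⟩ := exists_lift_of_injective_of_divisible j hj R.mkQ R.mkQ_surjective u
  have exists_preimage (n : N) : ∃ x, cover x = n ∧ i x = h (j n) := by
    obtain ⟨x, rfl⟩ := cover_surjective n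
    obtain ⟨y, hy, hiy⟩ : h (j (cover x)) - i x ∈ R :=
      (Submodule.Quotient.eq R).1 ((hh _).trans (u_cover x))
    exact ⟨y + x, by simp [LinearMap.mem_ker.1 hy], by simp [hiy]⟩
  choose s cover_s i_s using exists_preimage
  let split : N →ₗ[ℤ] N →₀ ℤ :=
    (AddMonoidHom.mk' s fun a b => i_injective (by simp [i_s])).toIntLinearMap
  exact Module.Projective.of_split split cover (LinearMap.ext cover_s)

theorem exists_retraction_ker {M P : Type*} [AddCommGroup M] [AddCommGroup P]
    [Module.Projective ℤ P] (p : M →+ P) : ∃ r : M →+ p.ker, ∀ x : p.ker, r x = x := by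
  have : Module.Projective ℤ p.range :=
    projective_int_of_injective p.range.subtype.toIntLinearMap Subtype.val_injective
  obtain ⟨s, hs⟩ := Module.projective_lifting_property p.rangeRestrict.toIntLinearMap
    LinearMap.id p.rangeRestrict_surjective
  have p_s (y : p.range) : p (s y) = y := congrArg Subtype.val (LinearMap.congr_fun hs y)
  refine ⟨(AddMonoidHom.id M - s.toAddMonoidHom.comp p.rangeRestrict).codRestrict p.ker
    fun x => by simp [AddMonoidHom.mem_ker, p_s], fun x => Subtype.ext ?_⟩
  have : p.rangeRestrict x = 0 := Subtype.ext x.2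
  simp [this]

end Projective

section Integers

variable {𝕂 : Type*} [Field 𝕂]

theorem mem_intSub_iff {x : 𝕂} : x ∈ intSub 𝕂 ↔ ∃ n : ℤ, (n : 𝕂) = x := by
  simp [intSub, mem_zmultiples_iff]

theorem qZ_eq_zero_iff {x : 𝕂} : qZ 𝕂 x = 0 ↔ x ∈ intSub 𝕂 :=
  QuotientAddGroup.eq_zero_iff x

theorem qZ_intCast (n : ℤ) : qZ 𝕂 n = 0 :=
  qZ_eq_zero_iff.2 (mem_intSub_iff.2 ⟨n, rfl⟩)

theorem exists_intCast_eq_of_forall_mem_intSub [CharZero 𝕂] {M : Type*} [AddCommGroup M]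
    (T : M →+ 𝕂) (hT : ∀ x, T x ∈ intSub 𝕂) : ∃ c : M →+ ℤ, ∀ x, (c x : 𝕂) = T x := by
  choose c hc using fun x => mem_intSub_iff.1 (hT x)
  have c_add (a b : M) : c (a + b) = c a + c b := Int.cast_injective (α := 𝕂) (by simp [hc])
  exact ⟨AddMonoidHom.mk' c c_add, hc⟩

end Integers

section Cochains

variable {I : ℕ → Type*} [∀ i, AddCommGroup (I i)] {bd : ∀ k, I (k + 1) →+ I k}
  {A : Type*} [AddCommGroup A] {𝕂 : Type*} [Field 𝕂] {k : ℕ}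

theorem codiff_codiff (hbd : ∀ k x, bd k (bd (k + 1) x) = 0) (T : I k →+ A) :
    codiff bd A (k + 1) (codiff bd A k T) = 0 := by
  ext β
  simp [codiff, hbd]

theorem codiff_PhiMap (s : I k →+ ℤ) :
    codiff bd 𝕂 k (PhiMap 𝕂 k s) = PhiMap 𝕂 (k + 1) (codiff bd ℤ k s) :=
  rfl

theorem PhiMap_injective [CharZero 𝕂] :
    Function.Injective (PhiMap 𝕂 k : (I k →+ ℤ) →+ (I k →+ 𝕂)) := fun _ _ h =>
  AddMonoidHom.ext fun x => Int.cast_injective (DFunLike.congr_fun h x)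

theorem codiff_eq_of_eqOn_Zc (hbd : ∀ k x, bd k (bd (k + 1) x) = 0) {T S : I k →+ A}
    (h : ∀ x ∈ Zc bd k, T x = S x) : codiff bd A k T = codiff bd A k S :=
  AddMonoidHom.ext fun β => h _ (mem_Zc_bd bd hbd k β)

theorem apply_eq_zero_of_mem_Bc_of_mem_Zc :
    ∀ {k : ℕ} {T : I k →+ A} {x : I k}, T ∈ Bc (codiff bd A) k → x ∈ Zc bd k → T x = 0
  | 0, _, x, hT, _ => DFunLike.congr_fun (AddSubgroup.mem_bot.1 hT) x
  | _ + 1, _, x, ⟨S, hS⟩, hx => by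
    rw [← hS]
    exact (congrArg S hx).trans (map_zero S)

theorem Hmk_eq_zero_iff {E : ℕ → Type*} [∀ i, AddCommGroup (E i)] {d : ∀ k, E k →+ E (k + 1)}
    {c : (d k).ker} : Hmk d k c = 0 ↔ (c : E k) ∈ Bc d k :=
  (QuotientAddGroup.eq_zero_iff c).trans AddSubgroup.mem_addSubgroupOf

theorem exists_extension_Zc [∀ i, Module.Projective ℤ (I i)] (g : Zc bd k →+ A) :
    ∃ h : I k →+ A, ∀ x : Zc bd k, h x = g x := by
  obtain ⟨r, hr⟩ : ∃ r : I k →+ Zc bd k, ∀ x : Zc bd k, r x = x := match k with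
    | 0 => ⟨(AddMonoidHom.id (I 0)).codRestrict ⊤ mem_top, fun _ => rfl⟩
    | n + 1 => exists_retraction_ker (bd n)
  exact ⟨g.comp r, fun x => congrArg g (hr x)⟩

end Cochains

section CycleReduction

variable {I : ℕ → Type*} [∀ i, AddCommGroup (I i)] {bd : ∀ k, I (k + 1) →+ I k}
  {𝕂 : Type*} [Field 𝕂] {k : ℕ}

variable (bd 𝕂 k) in
/-- The homomorphism `T ↦ (q ∘ T)|_{Z_k}` reducing `𝕂`-valued cochains modulo `ℤ` on cycles. -/
def cycleReduction : (I k →+ 𝕂) →+ (Zc bd k →+ KmodZ 𝕂) :=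
  AddMonoidHom.mk' (fun T => (qZ 𝕂).comp (T.comp (Zc bd k).subtype)) fun _ _ => by ext; simp

theorem cycleReduction_apply (T : I k →+ 𝕂) (x : Zc bd k) :
    cycleReduction bd 𝕂 k T x = qZ 𝕂 (T x) :=
  rfl

theorem cycleReduction_PhiMap (s : I k →+ ℤ) : cycleReduction bd 𝕂 k (PhiMap 𝕂 k s) = 0 :=
  AddMonoidHom.ext fun x => qZ_intCast (s x)

theorem cycleReduction_eq_zero_of_mem_Bc {T : I k →+ 𝕂} (hT : T ∈ Bc (codiff bd 𝕂) k) :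
    cycleReduction bd 𝕂 k T = 0 := by
  ext x
  simp [cycleReduction_apply, apply_eq_zero_of_mem_Bc_of_mem_Zc hT x.2]

theorem cycleReduction_eq_zero_iff {T : I k →+ 𝕂} :
    cycleReduction bd 𝕂 k T = 0 ↔ ∀ x ∈ Zc bd k, T x ∈ intSub 𝕂 := by
  simp [DFunLike.ext_iff, cycleReduction_apply, qZ_eq_zero_iff]

theorem cycleReduction_surjective [∀ i, Module.Projective ℤ (I i)] :
    Function.Surjective (cycleReduction bd 𝕂 k) := fun f => by
  obtain ⟨g, hg⟩ := exists_extension_Zc f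
  obtain ⟨T, hT⟩ := Module.projective_lifting_property (qZ 𝕂).toIntLinearMap g.toIntLinearMap
    (QuotientAddGroup.mk'_surjective (intSub 𝕂))
  exact ⟨T.toAddMonoidHom,
    AddMonoidHom.ext fun x => (LinearMap.congr_fun hT (x : I k)).trans (hg x)⟩

theorem exists_codiff_eq_of_cycleReduction_eq_zero [CharZero 𝕂] [∀ i, Module.Projective ℤ (I i)]
    (hbd : ∀ k x, bd k (bd (k + 1) x) = 0) {T : I k →+ 𝕂} (hT : cycleReduction bd 𝕂 k T = 0) :
    ∃ s : I k →+ ℤ, codiff bd 𝕂 k T = PhiMap 𝕂 (k + 1) (codiff bd ℤ k s) := by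
  obtain ⟨s₀, hs₀⟩ := exists_intCast_eq_of_forall_mem_intSub (T.comp (Zc bd k).subtype)
    fun x => cycleReduction_eq_zero_iff.1 hT x x.2
  obtain ⟨s, hs⟩ := exists_extension_Zc s₀
  have T_eq_s (x : I k) (hx : x ∈ Zc bd k) : T x = PhiMap 𝕂 k s x :=
    ((congrArg Int.cast (hs ⟨x, hx⟩)).trans (hs₀ ⟨x, hx⟩)).symm
  exact ⟨s, codiff_eq_of_eqOn_Zc hbd T_eq_s⟩

end CycleReduction

section Sparks

variable {𝕂 : Type*} [Field 𝕂] {I E : ℕ → Type*}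
  [∀ i, AddCommGroup (I i)] [∀ i, AddCommGroup (E i)]
  {bd : ∀ k, I (k + 1) →+ I k} (hbd : ∀ k x, bd k (bd (k + 1) x) = 0)
  {d : ∀ k, E k →+ E (k + 1)} {pair : ∀ k, E k →+ (I k →+ 𝕂)}
  (int_triv : ∀ (k : ℕ) (e : E k), (∀ β : I k, pair k e β ∈ intSub 𝕂) → e = 0)
  (stokes : ∀ (k : ℕ) (e : E k) (α : I (k + 1)), pair k e (bd k α) = pair (k + 1) (d k e) α)
  (k : ℕ)

variable (bd pair) in
/-- The group of sparks of degree `k`: triples `(T, ω, c)` with `δT = ω̃ - c`, that is, the data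
from which the class `δ₂ f = [c]` of `f = (q ∘ T)|_{Z_k}` is computed. -/
def sparks : AddSubgroup ((I k →+ 𝕂) × E (k + 1) × (I (k + 1) →+ ℤ)) where
  carrier := {s | codiff bd 𝕂 k s.1 = pair (k + 1) s.2.1 - PhiMap 𝕂 (k + 1) s.2.2}
  add_mem' {s t} hs ht := by
    simp only [Set.mem_ofPred_eq, Prod.fst_add, Prod.snd_add, map_add] at hs ht ⊢
    rw [hs, ht]
    abel
  zero_mem' := by simp
  neg_mem' {s} hs := by
    simp only [Set.mem_ofPred_eq, Prod.fst_neg, Prod.snd_neg, map_neg] at hs ⊢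
    rw [hs]
    abel

variable {k}

theorem mem_sparks_iff {T : I k →+ 𝕂} {ω : E (k + 1)} {c : I (k + 1) →+ ℤ} :
    (T, ω, c) ∈ sparks bd pair k ↔ codiff bd 𝕂 k T = pair (k + 1) ω - PhiMap 𝕂 (k + 1) c :=
  Iff.rfl

include stokes in
theorem codiff_pair (e : E k) : codiff bd 𝕂 k (pair k e) = pair (k + 1) (d k e) :=
  AddMonoidHom.ext (stokes k e)

include int_triv in
theorem eq_zero_of_pair_eq_PhiMap {e : E k} {c : I k →+ ℤ} (h : pair k e = PhiMap 𝕂 k c) :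
    e = 0 :=
  int_triv k e fun β => mem_intSub_iff.2 ⟨c β, (DFunLike.congr_fun h β).symm⟩

include hbd int_triv stokes in
theorem d_eq_zero_of_mem_sparks {T : I k →+ 𝕂} {ω : E (k + 1)} {c : I (k + 1) →+ ℤ}
    (h : (T, ω, c) ∈ sparks bd pair k) : d (k + 1) ω = 0 := by
  have pair_d : pair (k + 2) (d (k + 1) ω) = PhiMap 𝕂 (k + 2) (codiff bd ℤ (k + 1) c) :=
    sub_eq_zero.1 <| calc
      _ = codiff bd 𝕂 (k + 1) (pair (k + 1) ω - PhiMap 𝕂 (k + 1) c) := by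
        rw [map_sub, codiff_pair stokes, codiff_PhiMap]
      _ = codiff bd 𝕂 (k + 1) (codiff bd 𝕂 k T) := congrArg _ h.symm
      _ = 0 := codiff_codiff hbd T
  exact eq_zero_of_pair_eq_PhiMap int_triv pair_d

include hbd int_triv stokes in
theorem codiff_eq_zero_of_mem_sparks [CharZero 𝕂] {T : I k →+ 𝕂} {ω : E (k + 1)}
    {c : I (k + 1) →+ ℤ} (h : (T, ω, c) ∈ sparks bd pair k) : codiff bd ℤ (k + 1) c = 0 := by
  have c_eq : PhiMap 𝕂 (k + 1) c = pair (k + 1) ω - codiff bd 𝕂 k T := by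
    rw [mem_sparks_iff.1 h, sub_sub_cancel]
  apply PhiMap_injective (𝕂 := 𝕂)
  rw [← codiff_PhiMap, c_eq, map_sub, codiff_pair stokes,
    d_eq_zero_of_mem_sparks hbd int_triv stokes h, codiff_codiff hbd, map_zero, map_zero, sub_zero]

variable (k)

/-- The differential character `(q ∘ T)|_{Z_k}` of a spark `(T, ω, c)`. -/
def sparkCharacter : sparks bd pair k →+ DiffChar bd hbd pair k :=
  (((cycleReduction bd 𝕂 k).comp (AddMonoidHom.fst _ _)).comp
    (sparks bd pair k).subtype).codRestrict _ fun s => ⟨s.1.2.1, fun β => by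
      have : s.1.1 (bd k β) = pair (k + 1) s.1.2.1 β - (s.1.2.2 β : 𝕂) := DFunLike.congr_fun s.2 β
      simp [cycleReduction_apply, this, qZ_intCast]⟩

/-- The cohomology class `[c]` of a spark `(T, ω, c)`. -/
def sparkClass [CharZero 𝕂] : sparks bd pair k →+ Hc (codiff bd ℤ) (k + 1) :=
  (Hmk (codiff bd ℤ) (k + 1)).comp <|
    (((AddMonoidHom.snd _ _).comp (AddMonoidHom.snd _ _)).comp
      (sparks bd pair k).subtype).codRestrict _ fun s =>
        codiff_eq_zero_of_mem_sparks hbd int_triv stokes s.2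

theorem sparkCharacter_surjective [CharZero 𝕂] [∀ i, Module.Projective ℤ (I i)] :
    Function.Surjective (sparkCharacter (pair := pair) hbd k) := by
  rintro ⟨f, ω, hω⟩
  obtain ⟨T, rfl⟩ := cycleReduction_surjective f
  have periods (β : I (k + 1)) : (pair (k + 1) ω - codiff bd 𝕂 k T) β ∈ intSub 𝕂 :=
    qZ_eq_zero_iff.1 <| (map_sub (qZ 𝕂) _ _).trans (sub_eq_zero.2 (hω β).symm)
  obtain ⟨c, hc⟩ := exists_intCast_eq_of_forall_mem_intSub _ periods
  have PhiMap_c : PhiMap 𝕂 (k + 1) c = pair (k + 1) ω - codiff bd 𝕂 k T := AddMonoidHom.ext hc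
  exact ⟨⟨(T, ω, c), mem_sparks_iff.2 (by rw [PhiMap_c, sub_sub_cancel])⟩, rfl⟩

theorem sparkClass_surjective [CharZero 𝕂]
    (deRham_surj : ∀ (k : ℕ) (h : I k →+ 𝕂), codiff bd 𝕂 k h = 0 →
      ∃ e : E k, d k e = 0 ∧ h - pair k e ∈ Bc (codiff bd 𝕂) k) :
    Function.Surjective (sparkClass hbd int_triv stokes k) := fun y => by
  obtain ⟨⟨c, hc⟩, rfl⟩ := QuotientAddGroup.mk'_surjective _ y
  obtain ⟨ω, -, T, hT⟩ := deRham_surj (k + 1) (PhiMap 𝕂 (k + 1) c) (by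
    rw [codiff_PhiMap, show codiff bd ℤ (k + 1) c = 0 from hc, map_zero])
  exact ⟨⟨(-T, ω, c), mem_sparks_iff.2 (by rw [map_neg, hT, neg_sub])⟩, rfl⟩

theorem ker_sparkCharacter_le_ker_sparkClass [CharZero 𝕂] [∀ i, Module.Projective ℤ (I i)] :
    (sparkCharacter hbd k).ker ≤ (sparkClass hbd int_triv stokes k).ker := by
  rintro ⟨⟨T, ω, c⟩, spark_eq⟩ hT
  have reduction_T : cycleReduction bd 𝕂 k T = 0 := congrArg Subtype.val hT
  obtain ⟨s, hs⟩ := exists_codiff_eq_of_cycleReduction_eq_zero hbd reduction_T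
  have pair_ω : pair (k + 1) ω = PhiMap 𝕂 (k + 1) (codiff bd ℤ k s + c) := by
    rw [map_add, ← hs, mem_sparks_iff.1 spark_eq, sub_add_cancel]
  have ω_eq_zero : ω = 0 := eq_zero_of_pair_eq_PhiMap int_triv pair_ω
  have codiff_add : codiff bd ℤ k s + c = 0 := PhiMap_injective (𝕂 := 𝕂) <| by
    rw [← pair_ω, ω_eq_zero, map_zero, map_zero]
  exact Hmk_eq_zero_iff.2 ⟨-s, (map_neg _ s).trans (eq_neg_of_add_eq_zero_right codiff_add).symm⟩

/-- The homomorphism `δ₂`, obtained by descending `sparkClass` along `sparkCharacter`. -/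
def characteristicClass [CharZero 𝕂] [∀ i, Module.Projective ℤ (I i)] :
    DiffChar bd hbd pair k →+ Hc (codiff bd ℤ) (k + 1) :=
  (sparkCharacter hbd k).liftOfSurjective (sparkCharacter_surjective hbd k)
    ⟨sparkClass hbd int_triv stokes k,
      ker_sparkCharacter_le_ker_sparkClass hbd int_triv stokes k⟩

theorem characteristicClass_sparkCharacter [CharZero 𝕂] [∀ i, Module.Projective ℤ (I i)]
    (s : sparks bd pair k) :
    characteristicClass hbd int_triv stokes k (sparkCharacter hbd k s) =
      sparkClass hbd int_triv stokes k s :=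
  AddMonoidHom.liftOfRightInverse_comp_apply _ _ _ _ s

theorem characteristicClass_surjective [CharZero 𝕂] [∀ i, Module.Projective ℤ (I i)]
    (deRham_surj : ∀ (k : ℕ) (h : I k →+ 𝕂), codiff bd 𝕂 k h = 0 →
      ∃ e : E k, d k e = 0 ∧ h - pair k e ∈ Bc (codiff bd 𝕂) k) :
    Function.Surjective (characteristicClass hbd int_triv stokes k) := fun y => by
  obtain ⟨s, rfl⟩ := sparkClass_surjective hbd int_triv stokes k deRham_surj y
  exact ⟨_, characteristicClass_sparkCharacter hbd int_triv stokes k s⟩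

/-- The spark `(α̃, dα, 0)` of a form `α`. -/
def formSpark : E k →+ sparks bd pair k :=
  ((pair k).prod ((d k).prod 0)).codRestrict _ fun α => mem_sparks_iff.2 <| by
    rw [codiff_pair stokes, AddMonoidHom.zero_apply, map_zero, sub_zero]

/-- The differential character `(q ∘ α̃)|_{Z_k}` of a form `α`. -/
def formCharacter : E k →+ DiffChar bd hbd pair k :=
  (sparkCharacter hbd k).comp (formSpark stokes k)

include int_triv in
theorem formCharacter_eq_zero_iff {α : E k} :
    formCharacter hbd stokes k α = 0 ↔ α ∈ Ezero bd d pair k := by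
  have periods : formCharacter hbd stokes k α = 0 ↔ ∀ x ∈ Zc bd k, pair k α x ∈ intSub 𝕂 :=
    Subtype.ext_iff.trans cycleReduction_eq_zero_iff
  refine periods.trans ⟨fun h => ⟨int_triv _ _ fun β => ?_, h⟩, And.right⟩
  rw [← stokes]
  exact h _ (mem_Zc_bd bd hbd k β)

theorem characteristicClass_formCharacter [CharZero 𝕂] [∀ i, Module.Projective ℤ (I i)]
    (α : E k) : characteristicClass hbd int_triv stokes k (formCharacter hbd stokes k α) = 0 :=
  (characteristicClass_sparkCharacter hbd int_triv stokes k (formSpark stokes k α)).trans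
    (map_zero (Hmk (codiff bd ℤ) (k + 1)))

variable
  (deRham_inj : ∀ (k : ℕ) (e : E k), d k e = 0 → pair k e ∈ Bc (codiff bd 𝕂) k → e ∈ Bc d k)
  (deRham_surj : ∀ (k : ℕ) (h : I k →+ 𝕂), codiff bd 𝕂 k h = 0 →
    ∃ e : E k, d k e = 0 ∧ h - pair k e ∈ Bc (codiff bd 𝕂) k)

include hbd int_triv stokes deRham_inj deRham_surj

theorem exists_sub_pair_mem_Bc {T : I k →+ 𝕂} {ω : E (k + 1)}
    (h : codiff bd 𝕂 k T = pair (k + 1) ω) : ∃ α : E k, T - pair k α ∈ Bc (codiff bd 𝕂) k := by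
  have dω : d (k + 1) ω = 0 := d_eq_zero_of_mem_sparks hbd int_triv stokes (T := T) (c := 0) <|
    mem_sparks_iff.2 (by rw [h, map_zero, sub_zero])
  obtain ⟨η, rfl⟩ := deRham_inj (k + 1) ω dω ⟨T, h⟩
  obtain ⟨e, -, he⟩ := deRham_surj k (T - pair k η) (by
    rw [map_sub, h, codiff_pair stokes, sub_self])
  exact ⟨η + e, by rwa [map_add, ← sub_sub]⟩

theorem exists_formCharacter_eq_sparkCharacter [CharZero 𝕂] {s : sparks bd pair k}
    (hs : sparkClass hbd int_triv stokes k s = 0) :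
    ∃ α : E k, formCharacter hbd stokes k α = sparkCharacter hbd k s := by
  obtain ⟨⟨T, ω, c⟩, spark_eq⟩ := s
  obtain ⟨s, rfl : codiff bd ℤ k s = c⟩ := Hmk_eq_zero_iff.1 hs
  have codiff_add : codiff bd 𝕂 k (T + PhiMap 𝕂 k s) = pair (k + 1) ω := by
    rw [map_add, mem_sparks_iff.1 spark_eq, codiff_PhiMap, sub_add_cancel]
  obtain ⟨α, hα⟩ :=
    exists_sub_pair_mem_Bc hbd int_triv stokes k deRham_inj deRham_surj codiff_add
  have reduction_eq : cycleReduction bd 𝕂 k (pair k α) = cycleReduction bd 𝕂 k T :=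
    calc cycleReduction bd 𝕂 k (pair k α)
      _ = cycleReduction bd 𝕂 k (T + PhiMap 𝕂 k s) :=
        (sub_eq_zero.1 <| (map_sub _ _ _).symm.trans <| cycleReduction_eq_zero_of_mem_Bc hα).symm
      _ = cycleReduction bd 𝕂 k T :=
        (map_add _ _ _).trans (add_eq_left.2 (cycleReduction_PhiMap s))
  exact ⟨α, Subtype.ext reduction_eq⟩

theorem characteristicClass_eq_zero_iff [CharZero 𝕂] [∀ i, Module.Projective ℤ (I i)]
    {f : DiffChar bd hbd pair k} :
    characteristicClass hbd int_triv stokes k f = 0 ↔ f ∈ (formCharacter hbd stokes k).range := by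
  constructor
  · obtain ⟨s, rfl⟩ := sparkCharacter_surjective hbd k f
    rw [characteristicClass_sparkCharacter]
    exact exists_formCharacter_eq_sparkCharacter hbd int_triv stokes k deRham_inj deRham_surj
  · rintro ⟨α, rfl⟩
    exact characteristicClass_formCharacter hbd int_triv stokes k α

end Sparks

theorem statement4_general
    {𝕂 : Type*} [Field 𝕂] [CharZero 𝕂]
    (I E : ℕ → Type*)
    [∀ i, AddCommGroup (I i)] [∀ i, Module.Projective ℤ (I i)] [∀ i, AddCommGroup (E i)]
    (bd : ∀ k, I (k + 1) →+ I k)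
    (hbd : ∀ k x, bd k (bd (k + 1) x) = 0)
    (d : ∀ k, E k →+ E (k + 1))
    (pair : ∀ k, E k →+ (I k →+ 𝕂))
    (int_triv : ∀ (k : ℕ) (e : E k), (∀ β : I k, pair k e β ∈ intSub 𝕂) → e = 0)
    (stokes : ∀ (k : ℕ) (e : E k) (α : I (k + 1)), pair k e (bd k α) = pair (k + 1) (d k e) α)
    (deRham_inj : ∀ (k : ℕ) (e : E k), d k e = 0 → pair k e ∈ Bc (codiff bd 𝕂) k → e ∈ Bc d k)
    (deRham_surj : ∀ (k : ℕ) (h : I k →+ 𝕂), codiff bd 𝕂 k h = 0 →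
      ∃ e : E k, d k e = 0 ∧ h - pair k e ∈ Bc (codiff bd 𝕂) k)
    (k : ℕ) :
    ∃ (ja : E k →+ ↥(DiffChar bd hbd pair k))
      (δ₂ : ↥(DiffChar bd hbd pair k) →+ Hc (codiff bd ℤ) (k + 1)),
      (∀ α : E k, ((ja α) : ↥(Zc bd k) →+ KmodZ 𝕂)
          = (qZ 𝕂).comp ((pair k α).comp (Zc bd k).subtype)) ∧
      (∀ α : E k, ja α = 0 ↔ α ∈ Ezero bd d pair k) ∧
      (∀ (f : ↥(DiffChar bd hbd pair k)) (T : I k →+ 𝕂) (ω : E (k + 1))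
          (c : I (k + 1) →+ ℤ) (hc : c ∈ (codiff bd ℤ (k + 1)).ker),
          (∀ x : ↥(Zc bd k), qZ 𝕂 (T x) = (f : ↥(Zc bd k) →+ KmodZ 𝕂) x) →
          codiff bd 𝕂 k T = pair (k + 1) ω - PhiMap 𝕂 (k + 1) c →
          δ₂ f = Hmk (codiff bd ℤ) (k + 1) ⟨c, hc⟩) ∧
      Function.Surjective δ₂ ∧
      (∀ f, δ₂ f = 0 ↔ f ∈ ja.range) := by
  refine ⟨formCharacter hbd stokes k, characteristicClass hbd int_triv stokes k, fun _ => rfl,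
    fun _ => formCharacter_eq_zero_iff hbd int_triv stokes k, fun f T ω c _ hf spark_eq => ?_,
    characteristicClass_surjective hbd int_triv stokes k deRham_surj,
    fun _ => characteristicClass_eq_zero_iff hbd int_triv stokes k deRham_inj deRham_surj⟩
  obtain rfl : sparkCharacter hbd k ⟨(T, ω, c), spark_eq⟩ = f :=
    Subtype.ext (AddMonoidHom.ext hf)
  exact characteristicClass_sparkCharacter hbd int_triv stokes k _

/-- There is a short exact sequence
`0 → E^k/E^k_0 → Diff^k(𝒞𝒮) → H^{k+1}(I^•) → 0`, where the first map is induced by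
`α ↦ (q ∘ α̃)|_{Z_k(I_•)}` (with kernel exactly `E^k_0`) and the second is `δ₂`. -/
theorem statement4
    {𝕂 : Type*} [Field 𝕂] [CharZero 𝕂]
    (I E : ℕ → Type*)
    [∀ i, AddCommGroup (I i)] [∀ i, Module.Free ℤ (I i)]
    [∀ i, AddCommGroup (E i)] [∀ i, Module 𝕂 (E i)]
    (bd : ∀ k, I (k+1) →+ I k)
    (hbd : ∀ k x, bd k (bd (k+1) x) = 0)
    (d : ∀ k, E k →+ E (k+1))
    (hd : ∀ k x, d (k+1) (d k x) = 0)
    (hdsmul : ∀ (k : ℕ) (c : 𝕂) (e : E k), d k (c • e) = c • d k e)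
    (pair : ∀ k, E k →+ (I k →+ 𝕂))
    (pair_smul : ∀ (k : ℕ) (c : 𝕂) (e : E k) (x : I k), pair k (c • e) x = c * pair k e x)
    (pair_injE : ∀ k, Function.Injective (pair k))
    (pair_injI : ∀ (k : ℕ) (x y : I k), (∀ e : E k, pair k e x = pair k e y) → x = y)
    (int_triv : ∀ (k : ℕ) (e : E k), (∀ β : I k, pair k e β ∈ intSub 𝕂) → e = 0)
    (stokes : ∀ (k : ℕ) (e : E k) (α : I (k+1)), pair k e (bd k α) = pair (k+1) (d k e) α)
    (deRham_inj : ∀ (k : ℕ) (e : E k), d k e = 0 → pair k e ∈ Bc (codiff bd 𝕂) k → e ∈ Bc d k)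
    (deRham_surj : ∀ (k : ℕ) (h : I k →+ 𝕂), codiff bd 𝕂 k h = 0 →
      ∃ e : E k, d k e = 0 ∧ h - pair k e ∈ Bc (codiff bd 𝕂) k)
    (k : ℕ) :
    ∃ (ja : E k →+ ↥(DiffChar bd hbd pair k))
      (δ₂ : ↥(DiffChar bd hbd pair k) →+ Hc (codiff bd ℤ) (k+1)),
      (∀ α : E k, ((ja α) : ↥(Zc bd k) →+ KmodZ 𝕂)
          = (qZ 𝕂).comp ((pair k α).comp (Zc bd k).subtype)) ∧
      (∀ α : E k, ja α = 0 ↔ α ∈ Ezero bd d pair k) ∧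
      (∀ (f : ↥(DiffChar bd hbd pair k)) (T : I k →+ 𝕂) (ω : E (k+1))
          (c : I (k+1) →+ ℤ) (hc : c ∈ (codiff bd ℤ (k+1)).ker),
          (∀ x : ↥(Zc bd k), qZ 𝕂 (T x) = (f : ↥(Zc bd k) →+ KmodZ 𝕂) x) →
          codiff bd 𝕂 k T = pair (k+1) ω - PhiMap 𝕂 (k+1) c →
          δ₂ f = Hmk (codiff bd ℤ) (k+1) ⟨c, hc⟩) ∧
      Function.Surjective δ₂ ∧
      (∀ f, δ₂ f = 0 ↔ f ∈ ja.range) := by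
  exact statement4_general I E bd hbd d pair int_triv stokes deRham_inj deRham_surj k

end
end

section
/- Let S = (F^•, E^•, I^•) be a general spark complex and k ≥ 0, and let P^{k+1}(S) = {(w, [u]) ∈ E^{k+1} × H^{k+1}(I^•) : Ψ_*[u] = [w] in H^{k+1}(F^•)}. Then there is a short exact sequence of abelian groups 0 → H^k(F^•)/Ψ_*(H^k(I^•)) → Ĥ^k(S) → P^{k+1}(S) → 0, where the first map sends the class of a d-closed a ∈ F^k to the spark class [(a, 0, 0)], and the second map is δ'([(a, e, r)]) = (e, [r]). -/
open AddSubgroup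

noncomputable section

section Spark

variable {F E Ic : ℕ → Type*}
  [∀ i, AddCommGroup (F i)] [∀ i, AddCommGroup (E i)] [∀ i, AddCommGroup (Ic i)]

/-- The group of general sparks of degree `k` of a general spark complex
`(F^•, E^•, I^•)`: triples `(a, e, r)` with `da = e - Ψ(r)` (inside `F^{k+1}`,
via the embedding `j : E^• ↪ F^•`) and `dr = 0`. -/
def Sparks (dF : ∀ k, F k →+ F (k+1)) (dI : ∀ k, Ic k →+ Ic (k+1))
    (Ψ : ∀ k, Ic k →+ F k) (j : ∀ k, E k →+ F k) (k : ℕ) :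
    AddSubgroup (F k × E (k+1) × Ic (k+1)) where
  carrier := {p | dF k p.1 = j (k+1) p.2.1 - Ψ (k+1) p.2.2 ∧ dI (k+1) p.2.2 = 0}
  add_mem' := by
    rintro p q ⟨h1, h2⟩ ⟨h1', h2'⟩
    refine ⟨?_, ?_⟩ <;> simp [Prod.fst_add, Prod.snd_add, h1, h1', h2, h2'] <;> abel
  zero_mem' := by simp
  neg_mem' := by
    rintro p ⟨h1, h2⟩
    refine ⟨?_, ?_⟩ <;> simp [Prod.fst_neg, Prod.snd_neg, h1, h2] <;> abel

/-- The subgroup of sparks equivalent to `0`: a spark `(a, e, r)` is trivial when there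
are `b ∈ F^{k-1}` and `s ∈ I^k` with `a = db + Ψ(s)` and `r = -ds`. -/
def SparkRel (dF : ∀ k, F k →+ F (k+1)) (dI : ∀ k, Ic k →+ Ic (k+1))
    (Ψ : ∀ k, Ic k →+ F k) (j : ∀ k, E k →+ F k) (k : ℕ) :
    AddSubgroup ↥(Sparks dF dI Ψ j k) where
  carrier := {p | ∃ s : Ic k,
      (p : F k × E (k+1) × Ic (k+1)).1 - Ψ k s ∈ Bc dF k ∧
      (p : F k × E (k+1) × Ic (k+1)).2.2 = -(dI k s)}
  add_mem' := by
    rintro p q ⟨s, hs1, hs2⟩ ⟨t, ht1, ht2⟩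
    refine ⟨s + t, ?_, ?_⟩
    · have := add_mem hs1 ht1
      simpa [Prod.fst_add, map_add, add_sub_add_comm] using this
    · simp [Prod.snd_add, hs2, ht2]
      abel
  zero_mem' := ⟨0, by simp [zero_mem], by simp⟩
  neg_mem' := by
    rintro p ⟨s, hs1, hs2⟩
    refine ⟨-s, ?_, ?_⟩
    · have := neg_mem hs1
      simpa [Prod.fst_neg, map_neg, neg_sub, sub_eq_add_neg, add_comm] using this
    · simp [Prod.snd_neg, hs2]
  
/-- The group `Ĥ^k(𝒮)` of spark classes of degree `k`. -/
abbrev SparkH (dF : ∀ k, F k →+ F (k+1)) (dI : ∀ k, Ic k →+ Ic (k+1))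
    (Ψ : ∀ k, Ic k →+ F k) (j : ∀ k, E k →+ F k) (k : ℕ) :=
  ↥(Sparks dF dI Ψ j k) ⧸ SparkRel dF dI Ψ j k

/-- The class of a spark in `Ĥ^k(𝒮)`. -/
def sparkMk (dF : ∀ k, F k →+ F (k+1)) (dI : ∀ k, Ic k →+ Ic (k+1))
    (Ψ : ∀ k, Ic k →+ F k) (j : ∀ k, E k →+ F k) (k : ℕ) :
    ↥(Sparks dF dI Ψ j k) →+ SparkH dF dI Ψ j k :=
  QuotientAddGroup.mk' _

end Spark

section Cohomology

variable {A B : ℕ → Type*} [∀ i, AddCommGroup (A i)] [∀ i, AddCommGroup (B i)]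
  {dA : ∀ k, A k →+ A (k + 1)} {dB : ∀ k, B k →+ B (k + 1)} {k : ℕ}

theorem Hmk_surjective : Function.Surjective (Hmk dA k) :=
  QuotientAddGroup.mk'_surjective _

theorem Hmk_eq_zero_iff_s8 {z : (dA k).ker} : Hmk dA k z = 0 ↔ (z : A k) ∈ Bc dA k :=
  QuotientAddGroup.eq_zero_iff z

theorem Hmk_eq_Hmk_iff {z z' : (dA k).ker} :
    Hmk dA k z = Hmk dA k z' ↔ (z - z' : A k) ∈ Bc dA k := by
  rw [← sub_eq_zero, ← map_sub, Hmk_eq_zero_iff_s8, coe_sub]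

theorem Bc_le_ker (hdA : ∀ k x, dA (k + 1) (dA k x) = 0) : Bc dA k ≤ (dA k).ker := by
  cases k with
  | zero => exact bot_le
  | succ n => rintro _ ⟨x, rfl⟩; exact hdA n x

variable {f : ∀ k, A k →+ B k}

theorem cochainMap_mem_ker (hf : ∀ k x, f (k + 1) (dA k x) = dB k (f k x)) {x : A k}
    (hx : x ∈ (dA k).ker) : f k x ∈ (dB k).ker := by
  rw [AddMonoidHom.mem_ker, ← hf, (dA k).mem_ker.1 hx, map_zero]

theorem cochainMap_mem_Bc (hf : ∀ k x, f (k + 1) (dA k x) = dB k (f k x)) {x : A k}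
    (hx : x ∈ Bc dA k) : f k x ∈ Bc dB k := by
  cases k with
  | zero => rw [(mem_bot.1 hx : x = 0), map_zero]; exact zero_mem _
  | succ n => obtain ⟨y, rfl⟩ := hx; exact ⟨f n y, (hf n y).symm⟩

/-- The map `f_* : H^k(A^•) → H^k(B^•)` induced by a cochain morphism `f`. -/
def Hc.map (f : ∀ k, A k →+ B k) (hf : ∀ k x, f (k + 1) (dA k x) = dB k (f k x)) (k : ℕ) :
    Hc dA k →+ Hc dB k :=
  QuotientAddGroup.map _ _
    (((f k).comp (dA k).ker.subtype).codRestrict _ fun z ↦ cochainMap_mem_ker hf z.2)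
    fun _ hz ↦ cochainMap_mem_Bc hf hz

theorem Hc.map_mk (hf : ∀ k x, f (k + 1) (dA k x) = dB k (f k x)) (z : (dA k).ker) :
    Hc.map f hf k (Hmk dA k z) = Hmk dB k ⟨f k z, cochainMap_mem_ker hf z.2⟩ :=
  rfl

theorem Hmk_mem_range_map_iff (hf : ∀ k x, f (k + 1) (dA k x) = dB k (f k x))
    {z : (dB k).ker} :
    Hmk dB k z ∈ (Hc.map f hf k).range ↔ ∃ u, dA k u = 0 ∧ z - f k u ∈ Bc dB k := by
  rw [AddMonoidHom.mem_range, Hmk_surjective.exists]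
  simp only [Hc.map_mk, eq_comm (b := Hmk dB k z), Hmk_eq_Hmk_iff, Subtype.exists,
    AddMonoidHom.mem_ker, exists_prop]

end Cohomology

section SparkSequence

variable {F E Ic : ℕ → Type*}
  [∀ i, AddCommGroup (F i)] [∀ i, AddCommGroup (E i)] [∀ i, AddCommGroup (Ic i)]
  {dF : ∀ k, F k →+ F (k + 1)} {dE : ∀ k, E k →+ E (k + 1)} {dI : ∀ k, Ic k →+ Ic (k + 1)}
  {Ψ : ∀ k, Ic k →+ F k} {j : ∀ k, E k →+ F k} {k : ℕ}

theorem sparkMk_surjective : Function.Surjective (sparkMk dF dI Ψ j k) :=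
  QuotientAddGroup.mk'_surjective _

theorem sparkMk_eq_zero_iff {p : Sparks dF dI Ψ j k} :
    sparkMk dF dI Ψ j k p = 0 ↔ ∃ s, p.1.1 - Ψ k s ∈ Bc dF k ∧ p.1.2.2 = -dI k s :=
  QuotientAddGroup.eq_zero_iff p

theorem sparkMk_eq_sparkMk_iff {p q : Sparks dF dI Ψ j k} :
    sparkMk dF dI Ψ j k p = sparkMk dF dI Ψ j k q ↔
      ∃ s, p.1.1 - q.1.1 - Ψ k s ∈ Bc dF k ∧ p.1.2.2 - q.1.2.2 = -dI k s := by
  rw [← sub_eq_zero, ← map_sub, sparkMk_eq_zero_iff]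
  rfl

namespace Sparks

variable (dF dI Ψ j k) in
/-- The spark `(a, 0, 0)` of a cocycle `a ∈ F^k`. -/
def ofCocycle : (dF k).ker →+ Sparks dF dI Ψ j k :=
  ((AddMonoidHom.inl _ _).comp (dF k).ker.subtype).codRestrict _ fun a ↦
    ⟨a.2.trans (by simp), map_zero _⟩

theorem coe_ofCocycle (a : (dF k).ker) : (ofCocycle dF dI Ψ j k a).1 = (↑a, 0, 0) :=
  rfl

theorem curvature_mem_ker (hdF : ∀ k x, dF (k + 1) (dF k x) = 0)
    (hΨ : ∀ k x, Ψ (k + 1) (dI k x) = dF k (Ψ k x))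
    (hj : ∀ k x, j (k + 1) (dE k x) = dF k (j k x)) (hj_inj : ∀ k, Function.Injective (j k))
    (p : Sparks dF dI Ψ j k) : p.1.2.1 ∈ (dE (k + 1)).ker := by
  obtain ⟨⟨a, e, r⟩, hspark, hr⟩ := p
  refine (map_eq_zero_iff _ (hj_inj (k + 1 + 1))).1 ?_
  calc j (k + 1 + 1) (dE (k + 1) e)
      = dF (k + 1) (j (k + 1) e) := hj _ _
    _ = dF (k + 1) (dF k a + Ψ (k + 1) r) := by rw [hspark, sub_add_cancel]
    _ = Ψ (k + 1 + 1) (dI (k + 1) r) := by rw [map_add, hdF, zero_add, hΨ]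
    _ = 0 := by rw [hr, map_zero]

theorem curvature_eq_zero_of_mem_sparkRel (hdF : ∀ k x, dF (k + 1) (dF k x) = 0)
    (hΨ : ∀ k x, Ψ (k + 1) (dI k x) = dF k (Ψ k x)) (hj_inj : ∀ k, Function.Injective (j k))
    {p : Sparks dF dI Ψ j k} (hp : p ∈ SparkRel dF dI Ψ j k) : p.1.2.1 = 0 := by
  obtain ⟨s, hs, hr⟩ := hp
  have hda : dF k p.1.1 = dF k (Ψ k s) := by
    simpa only [AddMonoidHom.mem_ker, map_sub, sub_eq_zero] using Bc_le_ker hdF hs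
  refine (map_eq_zero_iff _ (hj_inj (k + 1))).1 ?_
  calc j (k + 1) p.1.2.1
      = dF k p.1.1 + Ψ (k + 1) p.1.2.2 := by rw [p.2.1, sub_add_cancel]
    _ = 0 := by rw [hda, hr, map_neg, hΨ, add_neg_cancel]

end Sparks

variable (k) in
/-- The group `P^k(𝒮)` of pairs `(w, c)` with `w ∈ E^k` closed and `[w] = Ψ_* c` in `H^k(F^•)`,
as the image in `E^k × H^k(I^•)` of a fibre product over `H^k(F^•)`. -/
def compatiblePairs (hΨ : ∀ k x, Ψ (k + 1) (dI k x) = dF k (Ψ k x))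
    (hj : ∀ k x, j (k + 1) (dE k x) = dF k (j k x)) : AddSubgroup (E k × Hc dI k) :=
  ((((Hc.map j hj k).comp (Hmk dE k)).comp (AddMonoidHom.fst _ _)).eqLocus
    ((Hc.map Ψ hΨ k).comp (AddMonoidHom.snd _ _))).map
      ((dE k).ker.subtype.prodMap (AddMonoidHom.id _))

theorem mk_mem_compatiblePairs_iff (hΨ : ∀ k x, Ψ (k + 1) (dI k x) = dF k (Ψ k x))
    (hj : ∀ k x, j (k + 1) (dE k x) = dF k (j k x)) {w : E k} {u : (dI k).ker} :
    (w, Hmk dI k u) ∈ compatiblePairs k hΨ hj ↔ dE k w = 0 ∧ j k w - Ψ k u ∈ Bc dF k := by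
  constructor
  · rintro ⟨⟨w, c⟩, hwc : Hc.map j hj k (Hmk dE k w) = Hc.map Ψ hΨ k c, hpair⟩
    obtain ⟨rfl, rfl⟩ := Prod.mk.inj hpair
    exact ⟨w.2, Hmk_eq_Hmk_iff.1 hwc⟩
  · rintro ⟨hw, hwu⟩
    exact ⟨(⟨w, hw⟩, Hmk dI k u), Hmk_eq_Hmk_iff.2 hwu, rfl⟩

namespace SparkH

variable (dF dI Ψ j k) in
/-- The first map `[a] ↦ [(a, 0, 0)]` of the sequence, on `H^k(F^•)` before dividing by
`Ψ_*(H^k(I^•))`. -/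
def ofCohomology : Hc dF k →+ SparkH dF dI Ψ j k :=
  QuotientAddGroup.map _ _ (Sparks.ofCocycle dF dI Ψ j k) fun a (ha : (a : F k) ∈ Bc dF k) ↦
    ⟨0, by simpa [Sparks.coe_ofCocycle] using ha, by simp [Sparks.coe_ofCocycle]⟩

theorem ofCohomology_mk (a : (dF k).ker) :
    ofCohomology dF dI Ψ j k (Hmk dF k a) =
      sparkMk dF dI Ψ j k (Sparks.ofCocycle dF dI Ψ j k a) :=
  rfl

theorem ker_ofCohomology (hΨ : ∀ k x, Ψ (k + 1) (dI k x) = dF k (Ψ k x)) :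
    (ofCohomology dF dI Ψ j k).ker = (Hc.map Ψ hΨ k).range := by
  ext x
  obtain ⟨a, rfl⟩ := Hmk_surjective x
  rw [AddMonoidHom.mem_ker, ofCohomology_mk, sparkMk_eq_zero_iff, Hmk_mem_range_map_iff]
  simp only [Sparks.coe_ofCocycle, zero_eq_neg, and_comm]

variable (k) in
/-- The curvature `e` of a spark class `[(a, e, r)]`: the first component of `δ'`. -/
def curvature (hdF : ∀ k x, dF (k + 1) (dF k x) = 0)
    (hΨ : ∀ k x, Ψ (k + 1) (dI k x) = dF k (Ψ k x)) (hj_inj : ∀ k, Function.Injective (j k)) :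
    SparkH dF dI Ψ j k →+ E (k + 1) :=
  QuotientAddGroup.lift _
    ((AddMonoidHom.fst _ _).comp ((AddMonoidHom.snd _ _).comp (Sparks dF dI Ψ j k).subtype))
    fun _ hp ↦ Sparks.curvature_eq_zero_of_mem_sparkRel hdF hΨ hj_inj hp

variable (dF dI Ψ j k) in
/-- The characteristic class `[r]` of a spark class `[(a, e, r)]`: the second component
of `δ'`. -/
def charClass : SparkH dF dI Ψ j k →+ Hc dI (k + 1) :=
  QuotientAddGroup.map _ _
    (((AddMonoidHom.snd _ _).comp
      ((AddMonoidHom.snd _ _).comp (Sparks dF dI Ψ j k).subtype)).codRestrict _ fun p ↦ p.2.2)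
    fun _ ⟨s, _, hr⟩ ↦ ⟨-s, (map_neg _ _).trans hr.symm⟩

variable (k) in
/-- The second map `δ' : [(a, e, r)] ↦ (e, [r])` of the sequence. -/
def delta (hdF : ∀ k x, dF (k + 1) (dF k x) = 0)
    (hΨ : ∀ k x, Ψ (k + 1) (dI k x) = dF k (Ψ k x)) (hj_inj : ∀ k, Function.Injective (j k)) :
    SparkH dF dI Ψ j k →+ E (k + 1) × Hc dI (k + 1) :=
  (curvature k hdF hΨ hj_inj).prod (charClass dF dI Ψ j k)

variable (hdF : ∀ k x, dF (k + 1) (dF k x) = 0)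
  (hΨ : ∀ k x, Ψ (k + 1) (dI k x) = dF k (Ψ k x)) (hj_inj : ∀ k, Function.Injective (j k))

theorem delta_mk (p : Sparks dF dI Ψ j k) :
    delta k hdF hΨ hj_inj (sparkMk dF dI Ψ j k p) = (p.1.2.1, Hmk dI (k + 1) ⟨p.1.2.2, p.2.2⟩) :=
  rfl

theorem range_delta (hj : ∀ k x, j (k + 1) (dE k x) = dF k (j k x)) :
    (delta k hdF hΨ hj_inj).range = compatiblePairs (k + 1) hΨ hj := by
  apply le_antisymm
  · rintro _ ⟨x, rfl⟩
    obtain ⟨p, rfl⟩ := sparkMk_surjective x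
    rw [delta_mk, mk_mem_compatiblePairs_iff]
    exact ⟨Sparks.curvature_mem_ker hdF hΨ hj hj_inj p, p.1.1, p.2.1⟩
  · rintro ⟨w, c⟩ hwc
    obtain ⟨u, rfl⟩ := Hmk_surjective c
    obtain ⟨-, a, ha⟩ := (mk_mem_compatiblePairs_iff hΨ hj).1 hwc
    exact ⟨sparkMk dF dI Ψ j k ⟨(a, w, u), ha, u.2⟩, rfl⟩

theorem ker_delta : (delta k hdF hΨ hj_inj).ker = (ofCohomology dF dI Ψ j k).range := by
  apply le_antisymm
  · intro x hx
    obtain ⟨⟨⟨a, e, r⟩, hspark, hr⟩, rfl⟩ := sparkMk_surjective x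
    obtain ⟨rfl : e = 0, hr_class⟩ := Prod.mk.inj hx
    obtain ⟨s, rfl : dI k s = r⟩ := Hmk_eq_zero_iff_s8.1 hr_class
    -- As `r = d s`, the spark `(a, 0, r)` is equivalent to `(a + Ψ s, 0, 0)`.
    have hclosed : a + Ψ k s ∈ (dF k).ker := by
      rw [AddMonoidHom.mem_ker, map_add, hspark, ← hΨ, map_zero, zero_sub, neg_add_cancel]
    refine ⟨Hmk dF k ⟨a + Ψ k s, hclosed⟩, ?_⟩
    rw [ofCohomology_mk, sparkMk_eq_sparkMk_iff]
    exact ⟨s, by simp [Sparks.coe_ofCocycle, zero_mem], zero_sub _⟩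
  · rintro _ ⟨x, rfl⟩
    obtain ⟨a, rfl⟩ := Hmk_surjective x
    exact Prod.ext rfl (map_zero (Hmk dI (k + 1)))

end SparkH

end SparkSequence

theorem statement8_general
    (F E Ic : ℕ → Type*)
    [∀ i, AddCommGroup (F i)] [∀ i, AddCommGroup (E i)] [∀ i, AddCommGroup (Ic i)]
    (dF : ∀ k, F k →+ F (k + 1)) (hdF : ∀ k x, dF (k + 1) (dF k x) = 0)
    (dE : ∀ k, E k →+ E (k + 1)) (dI : ∀ k, Ic k →+ Ic (k + 1))
    (Ψ : ∀ k, Ic k →+ F k) (hΨ : ∀ k x, Ψ (k + 1) (dI k x) = dF k (Ψ k x))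
    (j : ∀ k, E k →+ F k) (hj : ∀ k x, j (k + 1) (dE k x) = dF k (j k x))
    (hjinj : ∀ k, Function.Injective (j k))
    (k : ℕ) :
    ∃ (ι : Hc dF k →+ SparkH dF dI Ψ j k)
      (δ'₁ : SparkH dF dI Ψ j k →+ E (k + 1))
      (δ'₂ : SparkH dF dI Ψ j k →+ Hc dI (k + 1)),
      (∀ (a : F k) (ha : a ∈ (dF k).ker),
          ∃ hsp : ((a, 0, 0) : F k × E (k + 1) × Ic (k + 1)) ∈ Sparks dF dI Ψ j k,
            ι (Hmk dF k ⟨a, ha⟩) = sparkMk dF dI Ψ j k ⟨(a, 0, 0), hsp⟩) ∧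
      (∀ (a : F k) (ha : a ∈ (dF k).ker),
          ι (Hmk dF k ⟨a, ha⟩) = 0 ↔
            ∃ u : Ic k, dI k u = 0 ∧ a - Ψ k u ∈ Bc dF k) ∧
      (∀ p : ↥(Sparks dF dI Ψ j k),
          δ'₁ (sparkMk dF dI Ψ j k p) = (p : F k × E (k + 1) × Ic (k + 1)).2.1) ∧
      (∀ (p : ↥(Sparks dF dI Ψ j k))
          (hr : (p : F k × E (k + 1) × Ic (k + 1)).2.2 ∈ (dI (k + 1)).ker),
          δ'₂ (sparkMk dF dI Ψ j k p)
            = Hmk dI (k + 1) ⟨(p : F k × E (k + 1) × Ic (k + 1)).2.2, hr⟩) ∧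
      (∀ x : SparkH dF dI Ψ j k, dE (k + 1) (δ'₁ x) = 0 ∧
          ∃ (u : Ic (k + 1)) (hu : u ∈ (dI (k + 1)).ker),
            δ'₂ x = Hmk dI (k + 1) ⟨u, hu⟩ ∧
            j (k + 1) (δ'₁ x) - Ψ (k + 1) u ∈ Bc dF (k + 1)) ∧
      (∀ (w : E (k + 1)) (u : Ic (k + 1)) (hu : u ∈ (dI (k + 1)).ker),
          dE (k + 1) w = 0 → j (k + 1) w - Ψ (k + 1) u ∈ Bc dF (k + 1) →
          ∃ x, δ'₁ x = w ∧ δ'₂ x = Hmk dI (k + 1) ⟨u, hu⟩) ∧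
      (∀ x, (δ'₁ x = 0 ∧ δ'₂ x = 0) ↔ x ∈ ι.range) := by
  refine ⟨SparkH.ofCohomology dF dI Ψ j k, SparkH.curvature k hdF hΨ hjinj,
    SparkH.charClass dF dI Ψ j k, fun a ha ↦ ⟨(Sparks.ofCocycle dF dI Ψ j k ⟨a, ha⟩).2, rfl⟩,
    fun a ha ↦ ?_, fun _ ↦ rfl, fun _ _ ↦ rfl, fun x ↦ ?_, fun w u hu hw hwu ↦ ?_, fun x ↦ ?_⟩
  · rw [← AddMonoidHom.mem_ker, SparkH.ker_ofCohomology hΨ, Hmk_mem_range_map_iff]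
  · have hx : SparkH.delta k hdF hΨ hjinj x ∈ compatiblePairs (k + 1) hΨ hj :=
      SparkH.range_delta hdF hΨ hjinj hj ▸ ⟨x, rfl⟩
    obtain ⟨u, hu⟩ := Hmk_surjective (SparkH.charClass dF dI Ψ j k x)
    rw [SparkH.delta, AddMonoidHom.prod_apply, ← hu, mk_mem_compatiblePairs_iff] at hx
    exact ⟨hx.1, u, u.2, hu.symm, hx.2⟩
  · have hpair : (w, Hmk dI (k + 1) ⟨u, hu⟩) ∈ (SparkH.delta k hdF hΨ hjinj).range := by
      rw [SparkH.range_delta hdF hΨ hjinj hj, mk_mem_compatiblePairs_iff]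
      exact ⟨hw, hwu⟩
    exact hpair.imp fun _ hx ↦ Prod.mk.inj hx
  · rw [← SparkH.ker_delta hdF hΨ hjinj, AddMonoidHom.mem_ker, SparkH.delta,
      AddMonoidHom.prod_apply, Prod.mk_eq_zero]

/-- With `P^{k+1}(𝒮) = {(w, [u]) ∈ E^{k+1} × H^{k+1}(I^•) : Ψ_*[u] = [w]}`,
there is a short exact sequence
`0 → H^k(F^•)/Ψ_*(H^k(I^•)) → Ĥ^k(𝒮) → P^{k+1}(𝒮) → 0`,
where the first map sends the class of a `d`-closed `a ∈ F^k` to the spark class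
`[(a, 0, 0)]` and the second map is `δ'([(a, e, r)]) = (e, [r])`. -/
theorem statement8
    (F E Ic : ℕ → Type*)
    [∀ i, AddCommGroup (F i)] [∀ i, AddCommGroup (E i)] [∀ i, AddCommGroup (Ic i)]
    (dF : ∀ k, F k →+ F (k+1)) (hdF : ∀ k x, dF (k+1) (dF k x) = 0)
    (dE : ∀ k, E k →+ E (k+1)) (hdE : ∀ k x, dE (k+1) (dE k x) = 0)
    (dI : ∀ k, Ic k →+ Ic (k+1)) (hdI : ∀ k x, dI (k+1) (dI k x) = 0)
    (Ψ : ∀ k, Ic k →+ F k) (hΨ : ∀ k x, Ψ (k+1) (dI k x) = dF k (Ψ k x))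
    (j : ∀ k, E k →+ F k) (hj : ∀ k x, j (k+1) (dE k x) = dF k (j k x))
    (hjinj : ∀ k, Function.Injective (j k))
    (hiso_inj : ∀ (k : ℕ) (e : E k), dE k e = 0 → j k e ∈ Bc dF k → e ∈ Bc dE k)
    (hiso_surj : ∀ (k : ℕ) (a : F k), dF k a = 0 →
      ∃ e : E k, dE k e = 0 ∧ a - j k e ∈ Bc dF k)
    (k : ℕ) :
    ∃ (ι : Hc dF k →+ SparkH dF dI Ψ j k)
      (δ'₁ : SparkH dF dI Ψ j k →+ E (k+1))
      (δ'₂ : SparkH dF dI Ψ j k →+ Hc dI (k+1)),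
      (∀ (a : F k) (ha : a ∈ (dF k).ker),
          ∃ hsp : ((a, 0, 0) : F k × E (k+1) × Ic (k+1)) ∈ Sparks dF dI Ψ j k,
            ι (Hmk dF k ⟨a, ha⟩) = sparkMk dF dI Ψ j k ⟨(a, 0, 0), hsp⟩) ∧
      (∀ (a : F k) (ha : a ∈ (dF k).ker),
          ι (Hmk dF k ⟨a, ha⟩) = 0 ↔
            ∃ u : Ic k, dI k u = 0 ∧ a - Ψ k u ∈ Bc dF k) ∧
      (∀ p : ↥(Sparks dF dI Ψ j k),
          δ'₁ (sparkMk dF dI Ψ j k p) = (p : F k × E (k+1) × Ic (k+1)).2.1) ∧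
      (∀ (p : ↥(Sparks dF dI Ψ j k))
          (hr : (p : F k × E (k+1) × Ic (k+1)).2.2 ∈ (dI (k+1)).ker),
          δ'₂ (sparkMk dF dI Ψ j k p)
            = Hmk dI (k+1) ⟨(p : F k × E (k+1) × Ic (k+1)).2.2, hr⟩) ∧
      (∀ x : SparkH dF dI Ψ j k, dE (k+1) (δ'₁ x) = 0 ∧
          ∃ (u : Ic (k+1)) (hu : u ∈ (dI (k+1)).ker),
            δ'₂ x = Hmk dI (k+1) ⟨u, hu⟩ ∧
            j (k+1) (δ'₁ x) - Ψ (k+1) u ∈ Bc dF (k+1)) ∧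
      (∀ (w : E (k+1)) (u : Ic (k+1)) (hu : u ∈ (dI (k+1)).ker),
          dE (k+1) w = 0 → j (k+1) w - Ψ (k+1) u ∈ Bc dF (k+1) →
          ∃ x, δ'₁ x = w ∧ δ'₂ x = Hmk dI (k+1) ⟨u, hu⟩) ∧
      (∀ x, (δ'₁ x = 0 ∧ δ'₂ x = 0) ↔ x ∈ ι.range) :=
  statement8_general F E Ic dF hdF dE dI Ψ hΨ j hj hjinj k

end
end
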